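/- Let T > 0, k ≥ 2 an integer, α ∈ (0,1], and let g ∈ C^{k,α}[0,T] with g > 0 on (0,T]. Suppose there is j ∈ {1, …, k} with g^{(j)}(0) ≠ 0 and g^{(i)}(0) = 0 for i = 0, …, j−1. Define f(x) = x^{k+α} g(x) for x ∈ [0,T]. Then the quotient N(0,y)/D(0,y) is continuous on (0,T] and N(0,y)/D(0,y) → 0 as y → 0⁺. -/

import Mathlib

/-!
Write `p = k + α` and `f x = x ^ p * g x`. Since `p > k`, the function `f` is of class `C^k` on
`[0, T]` and its derivatives of order less than `k` vanish at `0`. Taylor's formula with integral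
remainder, applied to `f` at order `k` and to `f'` at order `k - 1`, therefore has no polynomial
part, and it identifies the two integrals (`pow_mul_integral_eq`): on `(0, T]`,
`N(0, y) = (k - 2)! f'(y)` and `D(0, y) = ((k - 1)! f(y)) ^ ((p - 1) / p)`.

Continuity of the quotient is then clear, because `f > 0` on `(0, T]`. For the limit, up to a
constant factor the quotient is `f' / f ^ (1 - 1 / p) = g ^ (1 / p) * (p + y g' / g)`.
By Taylor's formula at `0` (`tendsto_div_pow`), `g y / y ^ j` tends to a nonzero limit and
`g' y / y ^ (j - 1)` converges, so `y g' / g` converges, while `g ^ (1 / p)` tends to `0`.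
-/

open Set Filter Topology

/-- Taylor's formula with integral remainder at `0`, rescaled to the unit interval, for a function
whose Taylor polynomial of degree `n` at `0` vanishes. -/
lemma pow_mul_integral_eq {T : ℝ} {n : ℕ} {F : ℝ → ℝ}
    (hF : ContDiffOn ℝ (n + 1 : ℕ) F (Icc 0 T))
    (h0 : ∀ i ≤ n, iteratedDerivWithin i F (Icc 0 T) 0 = 0) {y : ℝ} (hy : y ∈ Ioc 0 T) :
    y ^ (n + 1) * ∫ s in (0:ℝ)..1, (1 - s) ^ n *
      iteratedDerivWithin (n + 1) F (Icc 0 T) (s * y) = n.factorial * F y := by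
  obtain ⟨hy0, hyT⟩ := hy
  have hsub : Icc 0 y ⊆ Icc 0 T := Icc_subset_Icc_right hyT
  -- Mathlib's formula takes derivatives within `[0, y]`; they agree with those within `[0, T]`.
  have hD : ∀ i ≤ n + 1, ∀ t ∈ Icc 0 y,
      iteratedDerivWithin i F (Icc 0 y) t = iteratedDerivWithin i F (Icc 0 T) t := by
    intro i hi t ht
    simp only [iteratedDerivWithin]
    rw [iteratedFDerivWithin_subset hsub (uniqueDiffOn_Icc hy0)
      (uniqueDiffOn_Icc (hy0.trans_le hyT)) (hF.of_le (by exact_mod_cast hi)) ht]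
  have key := taylor_integral_remainder (f := F) (x := y) (x₀ := 0) (n := n)
    (by rw [uIcc_of_le hy0.le]; exact hF.mono hsub)
  rw [uIcc_of_le hy0.le, taylor_within_apply, Finset.sum_eq_zero, sub_zero] at key
  swap
  · intro i hi
    have hi' : i ≤ n := Nat.lt_succ_iff.mp (Finset.mem_range.mp hi)
    rw [hD i (by omega) 0 ⟨le_rfl, hy0.le⟩, h0 i hi', smul_zero]
  have hsc := intervalIntegral.mul_integral_comp_mul_right (a := 0) (b := 1)
    (f := fun t => (y - t) ^ n / n.factorial * iteratedDerivWithin (n + 1) F (Icc 0 T) t) y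
  have hcongr : ∫ t in (0:ℝ)..y, ((y - t) ^ n / n.factorial) •
        iteratedDerivWithin (n + 1) F (Icc 0 y) t =
      ∫ t in (0:ℝ)..y, (y - t) ^ n / n.factorial * iteratedDerivWithin (n + 1) F (Icc 0 T) t := by
    refine intervalIntegral.integral_congr fun t ht => ?_
    rw [uIcc_of_le hy0.le] at ht
    simp only [smul_eq_mul]
    rw [hD (n + 1) le_rfl t ht]
  rw [zero_mul, one_mul, ← hcongr, ← key] at hsc
  have hfac : (n.factorial : ℝ) ≠ 0 := by exact_mod_cast n.factorial_ne_zero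
  rw [← hsc, ← intervalIntegral.integral_const_mul, ← intervalIntegral.integral_const_mul,
    ← intervalIntegral.integral_const_mul]
  refine intervalIntegral.integral_congr fun s _ => ?_
  have : y - s * y = y * (1 - s) := by ring
  simp only [this, mul_pow]
  field_simp
  ring

/-- The leading term of Taylor's formula at `0`. -/
lemma tendsto_div_pow {T : ℝ} (hT : 0 < T) {n : ℕ} {G : ℝ → ℝ}
    (hG : ContDiffOn ℝ n G (Icc 0 T))
    (h0 : ∀ i < n, iteratedDerivWithin i G (Icc 0 T) 0 = 0) :
    Tendsto (fun y => G y / y ^ n) (𝓝[>] 0)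
      (𝓝 (iteratedDerivWithin n G (Icc 0 T) 0 / n.factorial)) := by
  have h := Real.taylor_tendsto (convex_Icc 0 T) (left_mem_Icc.mpr hT.le) hG
  have h1 : 𝓝[>] (0 : ℝ) ≤ 𝓝[Icc 0 T] 0 := by
    rw [← nhdsWithin_Ioc_eq_nhdsGT hT]
    exact nhdsWithin_mono _ Ioc_subset_Icc_self
  have h2 := (h.mono_left h1).add_const (iteratedDerivWithin n G (Icc 0 T) 0 / n.factorial)
  rw [zero_add] at h2
  refine h2.congr' ?_
  filter_upwards [self_mem_nhdsWithin] with y hy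
  have hy0 : y ≠ 0 := (mem_Ioi.mp hy).ne'
  have hfac : (n.factorial : ℝ) ≠ 0 := by exact_mod_cast n.factorial_ne_zero
  rw [taylor_within_apply, Finset.sum_range_succ, Finset.sum_eq_zero]
  · simp only [sub_zero, smul_eq_mul]
    field_simp
    ring
  · intro i hi
    rw [h0 i (Finset.mem_range.mp hi), smul_zero]

lemma iteratedDerivWithin_rpow_zero {T p : ℝ} (hT : 0 < T) {i : ℕ} (hi : (i : ℝ) < p) :
    iteratedDerivWithin i (fun x : ℝ => x ^ p) (Icc 0 T) 0 = 0 := by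
  rw [iteratedDerivWithin_eq_iteratedDeriv (uniqueDiffOn_Icc hT)
    (Real.contDiff_rpow_const_of_le hi.le).contDiffAt (left_mem_Icc.mpr hT.le),
    iteratedDeriv_eq_iterate, Real.iter_deriv_rpow_const, Real.zero_rpow (by linarith), mul_zero]

/-- By the Leibniz rule, multiplication by `x ^ p` kills at `0` every derivative of order less
than `p`. -/
lemma iteratedDerivWithin_rpow_mul_zero {T p : ℝ} (hT : 0 < T) {i : ℕ} (hi : (i : ℝ) < p)
    {g : ℝ → ℝ} (hg : ContDiffOn ℝ i g (Icc 0 T)) :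
    iteratedDerivWithin i (fun x => x ^ p * g x) (Icc 0 T) 0 = 0 := by
  have h0 : (0 : ℝ) ∈ Icc 0 T := left_mem_Icc.mpr hT.le
  refine (iteratedDerivWithin_mul (f := fun x : ℝ => x ^ p) (g := g) h0 (uniqueDiffOn_Icc hT)
    (Real.contDiff_rpow_const_of_le hi.le).contDiffAt.contDiffWithinAt (hg 0 h0)).trans ?_
  refine Finset.sum_eq_zero fun m hm => ?_
  have hm' : m ≤ i := Nat.lt_succ_iff.mp (Finset.mem_range.mp hm)
  rw [iteratedDerivWithin_rpow_zero hT (lt_of_le_of_lt (by exact_mod_cast hm') hi)]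
  simp

/-- Example 2, zero limit case: If `g ∈ C^{k,α}[0,T]` with `g > 0` on
`(0,T]`, `g^{(j)}(0) ≠ 0` for some `j ∈ {1,…,k}` and `g^{(i)}(0) = 0` for `i = 0,…,j-1`,
and `f(x) = x^{k+α} g(x)`, then `N(0,y)/D(0,y)` is continuous on `(0,T]` and tends to `0`
as `y → 0⁺`. -/
theorem example_two_ND_zero_limit
    (T : ℝ) (hT : 0 < T) (k : ℕ) (hk : 2 ≤ k) (α : ℝ) (hα : α ∈ Set.Ioc (0 : ℝ) 1)
    (g : ℝ → ℝ)
    (hg : ContDiffOn ℝ k g (Set.Icc 0 T))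
    (hgHolder : ∃ C : ℝ, ∀ x ∈ Set.Icc 0 T, ∀ y ∈ Set.Icc 0 T,
      |iteratedDerivWithin k g (Set.Icc 0 T) x - iteratedDerivWithin k g (Set.Icc 0 T) y|
        ≤ C * |x - y| ^ α)
    (hgpos : ∀ x ∈ Set.Ioc 0 T, 0 < g x)
    (j : ℕ) (hj1 : 1 ≤ j) (hjk : j ≤ k)
    (hgj : iteratedDerivWithin j g (Set.Icc 0 T) 0 ≠ 0)
    (hgi : ∀ i : ℕ, i < j → iteratedDerivWithin i g (Set.Icc 0 T) 0 = 0) :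
    ContinuousOn (fun y =>
      (y ^ (k - 1) * ∫ s in (0:ℝ)..1, (1 - s) ^ (k - 2) *
        iteratedDerivWithin k (fun x => x ^ ((k : ℝ) + α) * g x) (Set.Icc 0 T) (s * y)) /
        ((y ^ k * ∫ s in (0:ℝ)..1, (1 - s) ^ (k - 1) *
          iteratedDerivWithin k (fun x => x ^ ((k : ℝ) + α) * g x) (Set.Icc 0 T) (s * y))
            ^ (((k : ℝ) + α - 1) / ((k : ℝ) + α)))) (Set.Ioc 0 T) ∧
    Filter.Tendsto (fun y =>
      (y ^ (k - 1) * ∫ s in (0:ℝ)..1, (1 - s) ^ (k - 2) *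
        iteratedDerivWithin k (fun x => x ^ ((k : ℝ) + α) * g x) (Set.Icc 0 T) (s * y)) /
        ((y ^ k * ∫ s in (0:ℝ)..1, (1 - s) ^ (k - 1) *
          iteratedDerivWithin k (fun x => x ^ ((k : ℝ) + α) * g x) (Set.Icc 0 T) (s * y))
            ^ (((k : ℝ) + α - 1) / ((k : ℝ) + α))))
      (nhdsWithin 0 (Set.Ioi 0)) (nhds 0) := by
  obtain ⟨hα0, hα1⟩ := hα
  set p : ℝ := (k : ℝ) + α with hp
  have hkp : (k : ℝ) < p := by linarith
  have hk2 : (2 : ℝ) ≤ k := by exact_mod_cast hk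
  have hp0 : 0 < p := by linarith
  have hU : UniqueDiffOn ℝ (Icc 0 T) := uniqueDiffOn_Icc hT
  set f : ℝ → ℝ := fun x => x ^ p * g x with hf
  set f' : ℝ → ℝ := derivWithin f (Icc 0 T) with hf'
  set g' : ℝ → ℝ := derivWithin g (Icc 0 T) with hg'
  have hfC : ContDiffOn ℝ k f (Icc 0 T) :=
    (Real.contDiff_rpow_const_of_le hkp.le).contDiffOn.mul hg
  have hf0 : ∀ i < k, iteratedDerivWithin i f (Icc 0 T) 0 = 0 := fun i hi =>
    iteratedDerivWithin_rpow_mul_zero hT (lt_trans (by exact_mod_cast hi) hkp)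
      (hg.of_le (by exact_mod_cast hi.le))
  obtain ⟨m, rfl⟩ : ∃ m, k = m + 2 := ⟨k - 2, by omega⟩
  obtain ⟨l, rfl⟩ : ∃ l, j = l + 1 := ⟨j - 1, by omega⟩
  have hf'C : ContDiffOn ℝ (m + 1 : ℕ) f' (Icc 0 T) :=
    hfC.derivWithin hU (by norm_cast)
  have hg'C : ContDiffOn ℝ l g' (Icc 0 T) :=
    hg.derivWithin hU (by exact_mod_cast hjk)
  have e1 : m + 2 - 1 = m + 1 := rfl
  have e2 : m + 2 - 2 = m := rfl
  have hfpos : ∀ y ∈ Ioc 0 T, 0 < f y := fun y hy =>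
    mul_pos (Real.rpow_pos_of_pos hy.1 _) (hgpos y hy)
  have hN : ∀ y ∈ Ioc 0 T, y ^ (m + 1) * (∫ s in (0:ℝ)..1, (1 - s) ^ m *
      iteratedDerivWithin (m + 2) f (Icc 0 T) (s * y)) = m.factorial * f' y := by
    intro y hy
    have := pow_mul_integral_eq hf'C (fun i hi => by
      rw [hf', ← iteratedDerivWithin_succ']
      exact hf0 _ (by omega)) hy
    rw [hf', ← iteratedDerivWithin_succ'] at this
    exact this
  have hD : ∀ y ∈ Ioc 0 T, y ^ (m + 2) * (∫ s in (0:ℝ)..1, (1 - s) ^ (m + 1) *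
      iteratedDerivWithin (m + 2) f (Icc 0 T) (s * y)) = (m + 1).factorial * f y :=
    fun y hy => pow_mul_integral_eq (n := m + 1) hfC (fun i hi => hf0 i (by omega)) hy
  rw [e1, e2]
  set q : ℝ := (p - 1) / p with hq
  have hfac : (0 : ℝ) < (m + 1).factorial := by exact_mod_cast (m + 1).factorial_pos
  constructor
  · have hc : ContinuousOn (fun y => (m.factorial * f' y) / ((m + 1).factorial * f y) ^ q)
        (Ioc 0 T) := by
      have c1 : ContinuousOn f (Ioc 0 T) := hfC.continuousOn.mono Ioc_subset_Icc_self
      have c2 : ContinuousOn f' (Ioc 0 T) := hf'C.continuousOn.mono Ioc_subset_Icc_self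
      refine (continuousOn_const.mul c2).div ((continuousOn_const.mul c1).rpow_const ?_) ?_
      · exact fun y hy => Or.inl (mul_pos hfac (hfpos y hy)).ne'
      · exact fun y hy => (Real.rpow_pos_of_pos (mul_pos hfac (hfpos y hy)) _).ne'
    refine hc.congr fun y hy => ?_
    simp only []
    rw [hN y hy, hD y hy]
  · have t1 := tendsto_div_pow hT (hg.of_le (by exact_mod_cast hjk)) hgi
    have t2 := tendsto_div_pow hT hg'C (fun i hi => by
      rw [hg', ← iteratedDerivWithin_succ']
      exact hgi _ (by omega))
    have t3 := t2.div t1 (div_ne_zero hgj (by exact_mod_cast (l + 1).factorial_ne_zero))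
    have hle : 𝓝[>] (0 : ℝ) ≤ 𝓝[Icc 0 T] 0 := by
      rw [← nhdsWithin_Ioc_eq_nhdsGT hT]
      exact nhdsWithin_mono _ Ioc_subset_Icc_self
    have t4 : Tendsto (fun y => g y ^ (1 / p)) (𝓝[>] 0) (𝓝 0) := by
      have hg0 : g 0 = 0 := by simpa using hgi 0 (by omega)
      have t : Tendsto g (𝓝[>] 0) (𝓝 (g 0)) :=
        (hg.continuousOn 0 (left_mem_Icc.mpr hT.le)).mono_left hle
      have := t.rpow_const (p := 1 / p) (Or.inr (by positivity))
      rwa [hg0, Real.zero_rpow (by positivity)] at this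
    have t5 := ((t4.mul (t3.const_add p)).const_mul
      (m.factorial / ((m + 1).factorial : ℝ) ^ q))
    rw [zero_mul, mul_zero] at t5
    refine t5.congr' ?_
    have hmem : Ioc 0 T ∈ 𝓝[>] (0 : ℝ) := Ioc_mem_nhdsGT hT
    filter_upwards [hmem] with y hy
    have hy0 := hy.1
    have hgy := hgpos y hy
    rw [hN y hy, hD y hy]
    -- It remains to check `f' / f ^ q = g ^ (1 / p) * (p + y g' / g)` at `y`, where `q = 1 - 1 / p`.
    have hder : f' y = p * y ^ (p - 1) * g y + y ^ p * g' y := by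
      have hyI : y ∈ Icc 0 T := Ioc_subset_Icc_self hy
      have d1 : HasDerivWithinAt (fun x : ℝ => x ^ p) (p * y ^ (p - 1)) (Icc 0 T) y :=
        (Real.hasDerivAt_rpow_const (Or.inl hy0.ne')).hasDerivWithinAt
      have d2 : HasDerivWithinAt g (g' y) (Icc 0 T) y :=
        (hg.differentiableOn (by simp) y hyI).hasDerivWithinAt
      exact (d1.mul d2).derivWithin (hU y hyI)
    have hpq : p * q = p - 1 := by rw [hq]; field_simp
    have hD' : ((m + 1).factorial * f y) ^ q =
        ((m + 1).factorial : ℝ) ^ q * (y ^ (p - 1) * g y ^ q) := by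
      rw [hf, Real.mul_rpow hfac.le (by positivity), Real.mul_rpow (by positivity) hgy.le,
        ← Real.rpow_mul hy0.le, hpq]
    have hgsplit : g y ^ (1 / p) * g y ^ q = g y := by
      rw [← Real.rpow_add hgy, hq]
      have : 1 / p + (p - 1) / p = 1 := by field_simp; ring
      rw [this, Real.rpow_one]
    have hysplit : y ^ p = y ^ (p - 1) * y := by
      rw [Real.rpow_sub_one hy0.ne']; field_simp
    have hA : 0 < g y ^ q := Real.rpow_pos_of_pos hgy _
    have hB : 0 < y ^ (p - 1) := Real.rpow_pos_of_pos hy0 _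
    have hC : 0 < ((m + 1).factorial : ℝ) ^ q := Real.rpow_pos_of_pos hfac _
    have hg1 : g y ^ (1 / p) = g y / g y ^ q := by rw [eq_div_iff hA.ne', hgsplit]
    rw [hder, hD', hysplit, hg1]
    simp only [Pi.div_apply]
    generalize g y ^ q = A at *
    generalize y ^ (p - 1) = B at *
    generalize ((m + 1).factorial : ℝ) ^ q = C at *
    field_simp
    ring
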